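/- Let I be an inversive plane of even order q, let x, y be two distinct points of I, and let C₁ ≠ C₂ be two circles of I such that every circle containing both x and y meets each of C₁ and C₂ in exactly one point. Then C₁ ∩ C₂ = ∅. -/

import Mathlib

/-- An inversive plane of order `q` on a finite point set `P`:
`|P| = q² + 1`, every circle has `q + 1` points, and any three distinct
points lie in exactly one circle. -/
structure InversivePlane (q : ℕ) (P : Type) [Fintype P] where
  two_le : 2 ≤ q
  circles : Finset (Finset P)
  card_points : Fintype.card P = q ^ 2 + 1
  circle_card : ∀ C ∈ circles, C.card = q + 1
  three_points : ∀ x y z : P, x ≠ y → x ≠ z → y ≠ z →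
      ∃! C, C ∈ circles ∧ x ∈ C ∧ y ∈ C ∧ z ∈ C

open Finset

/-!
The circles through a point `p` are the lines of an affine plane of order `q` on the remaining
points, in which tangency at `p` is parallelism, and a circle `E` avoiding `p` is an oval of
`q + 1` points. When `q` is even, `q + 1` is odd, so every parallel class contains a tangent of
`E`; as there are `q + 1` tangents and `q + 1` parallel classes, two parallel tangents coincide.
If `C₁` and `C₂` shared a point `p`, both would be tangent at `p` to the circle through `x`, `y`
and `p`, hence parallel, and both would be tangents of any other circle `E` through `x` and `y`.
-/

lemma sum_card_inter_eq_card_of_existsUnique {α : Type*} [DecidableEq α] {s : Finset α}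
    {𝓑 : Finset (Finset α)} (h : ∀ a ∈ s, ∃! B, B ∈ 𝓑 ∧ a ∈ B) :
    ∑ B ∈ 𝓑, #(s ∩ B) = #s := by
  have hcard : ∀ a ∈ s, #{B ∈ 𝓑 | a ∈ B} = 1 := fun a ha => by
    rw [card_eq_one, singleton_iff_unique_mem]
    simpa only [mem_filter] using h a ha
  rw [sum_card_inter hcard, mul_one]

namespace InversivePlane

variable {q : ℕ} {P : Type} [Fintype P] [DecidableEq P] {I : InversivePlane q P}

section Circles

lemma card_inter_le_two {C D : Finset P} (hC : C ∈ I.circles) (hD : D ∈ I.circles)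
    (hCD : C ≠ D) : #(C ∩ D) ≤ 2 := by
  by_contra! h
  obtain ⟨a, ha, b, hb, c, hc, hab, hac, hbc⟩ := two_lt_card.1 h
  rw [mem_inter] at ha hb hc
  exact hCD ((I.three_points a b c hab hac hbc).unique ⟨hC, ha.1, hb.1, hc.1⟩
    ⟨hD, ha.2, hb.2, hc.2⟩)

/-- The pencil with carriers `x` and `y`: the circles through both points. -/
def pencil (I : InversivePlane q P) (x y : P) : Finset (Finset P) :=
  {D ∈ I.circles | x ∈ D ∧ y ∈ D}

lemma mem_pencil {x y : P} {D : Finset P} :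
    D ∈ I.pencil x y ↔ D ∈ I.circles ∧ x ∈ D ∧ y ∈ D :=
  mem_filter

lemma existsUnique_mem_pencil (I : InversivePlane q P) {x y z : P} (hxy : x ≠ y) (hxz : x ≠ z)
    (hyz : y ≠ z) : ∃! D, D ∈ I.pencil x y ∧ z ∈ D := by
  simpa only [mem_pencil, and_assoc] using I.three_points x y z hxy hxz hyz

lemma sum_card_inter_pencil (I : InversivePlane q P) {x y : P} (hxy : x ≠ y) {s : Finset P}
    (hx : x ∉ s) (hy : y ∉ s) : ∑ D ∈ I.pencil x y, #(s ∩ D) = #s :=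
  sum_card_inter_eq_card_of_existsUnique fun _ hz =>
    I.existsUnique_mem_pencil hxy (ne_of_mem_of_not_mem hz hx).symm
      (ne_of_mem_of_not_mem hz hy).symm

lemma card_pencil (I : InversivePlane q P) {x y : P} (hxy : x ≠ y) :
    #(I.pencil x y) = q + 1 := by
  have hq := I.two_le
  have hinter : ∀ D ∈ I.pencil x y, #({x, y}ᶜ ∩ D) = q - 1 := fun D hD => by
    obtain ⟨hD, hxD, hyD⟩ := mem_pencil.1 hD
    have hsub : {x, y} ⊆ D := insert_subset hxD (singleton_subset_iff.2 hyD)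
    rw [inter_comm, ← sdiff_eq_inter_compl, card_sdiff_of_subset hsub, I.circle_card D hD,
      card_pair hxy]
    omega
  have hcompl : #({x, y}ᶜ : Finset P) = (q + 1) * (q - 1) := by
    rw [card_compl, I.card_points, card_pair hxy, ← Nat.sq_sub_sq]
    omega
  have hsum := I.sum_card_inter_pencil hxy (s := {x, y}ᶜ) (by simp) (by simp)
  rw [sum_congr rfl hinter, sum_const, smul_eq_mul, hcompl] at hsum
  exact Nat.eq_of_mul_eq_mul_right (by omega) hsum

lemma exists_mem_pencil_notMem (I : InversivePlane q P) {x y z : P} (hxy : x ≠ y) (hxz : x ≠ z)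
    (hyz : y ≠ z) : ∃ D ∈ I.pencil x y, z ∉ D := by
  obtain ⟨D, -, hunique⟩ := I.existsUnique_mem_pencil hxy hxz hyz
  have hcard : 1 < #(I.pencil x y) := by
    rw [I.card_pencil hxy]
    have := I.two_le
    omega
  obtain ⟨E, hE, hED⟩ := exists_mem_ne hcard D
  exact ⟨E, hE, fun hzE => hED (hunique E ⟨hE, hzE⟩)⟩

lemma existsUnique_tangent {C : Finset P} (hC : C ∈ I.circles) {p z : P} (hp : p ∈ C)
    (hz : z ∉ C) : ∃! D, D ∈ I.pencil p z ∧ #(C ∩ D) = 1 := by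
  have hpz : p ≠ z := ne_of_mem_of_not_mem hp hz
  have hmeet : ∀ D ∈ I.pencil p z,
      (if #(C ∩ D) = 1 then 1 else 0) + #(C.erase p ∩ D) = 1 := fun D hD => by
    obtain ⟨hD, hpD, hzD⟩ := mem_pencil.1 hD
    have hpCD : p ∈ C ∩ D := mem_inter.2 ⟨hp, hpD⟩
    have hle : #(C ∩ D) ≤ 2 := card_inter_le_two hC hD (ne_of_mem_of_not_mem' hzD hz).symm
    have hpos : 0 < #(C ∩ D) := card_pos.2 ⟨p, hpCD⟩
    rw [erase_inter, card_erase_of_mem hpCD]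
    split_ifs <;> omega
  have hsecant : ∑ D ∈ I.pencil p z, #(C.erase p ∩ D) = q := by
    rw [I.sum_card_inter_pencil hpz (notMem_erase p C) (fun h => hz (mem_of_mem_erase h)),
      card_erase_of_mem hp, I.circle_card C hC, Nat.add_sub_cancel]
  have hcount : #{D ∈ I.pencil p z | #(C ∩ D) = 1} + q = 1 + q := by
    calc #{D ∈ I.pencil p z | #(C ∩ D) = 1} + q
        = ∑ D ∈ I.pencil p z, ((if #(C ∩ D) = 1 then 1 else 0) + #(C.erase p ∩ D)) := by
          rw [sum_add_distrib, hsecant, card_filter]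
      _ = #(I.pencil p z) := by rw [sum_congr rfl hmeet, card_eq_sum_ones]
      _ = 1 + q := by rw [I.card_pencil hpz, add_comm]
  simpa only [mem_filter] using
    (singleton_iff_unique_mem _).1 (card_eq_one.1 (Nat.add_right_cancel hcount))

lemma disjoint_of_tangent_pencil {C : Finset P} (hC : C ∈ I.circles) {x y : P} (hxy : x ≠ y)
    (htan : ∀ D ∈ I.pencil x y, #(D ∩ C) = 1) : Disjoint {x, y} C := by
  rw [disjoint_left]
  intro v hv hvC
  obtain ⟨z, hzC, hz⟩ : ∃ z ∈ C, z ∉ ({x, y} : Finset P) := by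
    refine exists_mem_notMem_of_card_lt_card ?_
    rw [I.circle_card C hC, card_pair hxy]
    exact Nat.lt_succ_of_le I.two_le
  have hzxy : z ≠ x ∧ z ≠ y := by simpa using hz
  obtain ⟨D, hD, hzD⟩ := (I.existsUnique_mem_pencil hxy hzxy.1.symm hzxy.2.symm).exists
  have hvD : v ∈ D := by
    obtain ⟨-, hxD, hyD⟩ := mem_pencil.1 hD
    exact insert_subset hxD (singleton_subset_iff.2 hyD) hv
  have hvz : v = z := card_le_one.1 (htan D hD).le v (mem_inter.2 ⟨hvD, hvC⟩) z
    (mem_inter.2 ⟨hzD, hzC⟩)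
  exact hz (hvz ▸ hv)

end Circles

section Parallel

/-- Parallelism in the affine plane derived at `p`: two circles through `p` that are equal or
tangent. -/
structure ParallelAt (I : InversivePlane q P) (p : P) (C D : Finset P) : Prop where
  left_mem : C ∈ I.circles
  right_mem : D ∈ I.circles
  mem_left : p ∈ C
  mem_right : p ∈ D
  eq_or_tangent : C = D ∨ #(C ∩ D) = 1

variable {p : P} {C D E : Finset P}

lemma ParallelAt.symm (h : I.ParallelAt p C D) : I.ParallelAt p D C :=
  ⟨h.right_mem, h.left_mem, h.mem_right, h.mem_left,
    h.eq_or_tangent.imp Eq.symm fun ht => inter_comm C D ▸ ht⟩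

lemma ParallelAt.eq_of_mem (h : I.ParallelAt p C D) {z : P} (hz : z ≠ p) (hzC : z ∈ C)
    (hzD : z ∈ D) : C = D :=
  h.eq_or_tangent.resolve_right fun ht => hz <| card_le_one.1 ht.le z (mem_inter.2 ⟨hzC, hzD⟩) p
    (mem_inter.2 ⟨h.mem_left, h.mem_right⟩)

lemma existsUnique_parallelAt (hC : C ∈ I.circles) (hp : p ∈ C) {z : P} (hz : z ≠ p) :
    ∃! D, I.ParallelAt p C D ∧ z ∈ D := by
  by_cases hzC : z ∈ C
  · exact ⟨C, ⟨⟨hC, hC, hp, hp, .inl rfl⟩, hzC⟩, fun D hD => (hD.1.eq_of_mem hz hzC hD.2).symm⟩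
  obtain ⟨D, ⟨hD, hCD⟩, hunique⟩ := existsUnique_tangent hC hp hzC
  obtain ⟨hD, hpD, hzD⟩ := mem_pencil.1 hD
  refine ⟨D, ⟨⟨hC, hD, hp, hpD, .inr hCD⟩, hzD⟩, fun D' ⟨h, hzD'⟩ => hunique D' ⟨?_, ?_⟩⟩
  · exact mem_pencil.2 ⟨h.right_mem, h.mem_right, hzD'⟩
  · exact h.eq_or_tangent.resolve_left (ne_of_mem_of_not_mem' hzD' hzC).symm

lemma ParallelAt.trans (hCD : I.ParallelAt p C D) (hDE : I.ParallelAt p D E) :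
    I.ParallelAt p C E := by
  refine ⟨hCD.left_mem, hDE.right_mem, hCD.mem_left, hDE.mem_right, or_iff_not_imp_left.2 ?_⟩
  intro hne
  refine card_eq_one.2 ⟨p, eq_singleton_iff_unique_mem.2
    ⟨mem_inter.2 ⟨hCD.mem_left, hDE.mem_right⟩, fun z hz => ?_⟩⟩
  rw [mem_inter] at hz
  by_contra hzp
  exact hne ((existsUnique_parallelAt hCD.right_mem hCD.mem_right hzp).unique
    ⟨hCD.symm, hz.1⟩ ⟨hDE, hz.2⟩)

end Parallel

section Oval

variable {p : P} {C D E : Finset P}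

lemma exists_parallelAt_tangent (hq : Even q) (hC : C ∈ I.circles) (hp : p ∈ C)
    (hE : E ∈ I.circles) (hpE : p ∉ E) : ∃ D, I.ParallelAt p C D ∧ #(E ∩ D) = 1 := by
  classical
  have hpartition : ∑ D ∈ I.circles with I.ParallelAt p C D, #(E ∩ D) = #E := by
    refine sum_card_inter_eq_card_of_existsUnique fun z hz => ?_
    refine (existsUnique_congr fun D => ?_).2
      (existsUnique_parallelAt hC hp (ne_of_mem_of_not_mem hz hpE))
    rw [mem_filter, and_iff_right_of_imp ParallelAt.right_mem]
  have hodd : Odd #E := I.circle_card E hE ▸ hq.add_one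
  obtain ⟨D, hD, hDodd⟩ : ∃ D ∈ I.circles.filter (I.ParallelAt p C), Odd #(E ∩ D) := by
    by_contra! h
    rw [← hpartition, ← Nat.not_even_iff_odd] at hodd
    exact hodd (even_sum _ fun D hD => Nat.not_odd_iff_even.1 (h D hD))
  have hCD := (mem_filter.1 hD).2
  have hle : #(E ∩ D) ≤ 2 :=
    card_inter_le_two hE hCD.right_mem (ne_of_mem_of_not_mem' hCD.mem_right hpE).symm
  refine ⟨D, hCD, ?_⟩
  obtain ⟨k, hk⟩ := hDodd
  omega

/-- The tangents of the circle `E` through the point `p`. -/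
def tangentsThrough (I : InversivePlane q P) (p : P) (E : Finset P) : Finset (Finset P) :=
  {D ∈ I.circles | p ∈ D ∧ #(E ∩ D) = 1}

lemma mem_tangentsThrough :
    D ∈ I.tangentsThrough p E ↔ D ∈ I.circles ∧ p ∈ D ∧ #(E ∩ D) = 1 :=
  mem_filter

lemma card_tangentsThrough (hE : E ∈ I.circles) (hpE : p ∉ E) :
    #(I.tangentsThrough p E) = q + 1 := by
  have hunique : ∀ g ∈ E, ∃! D, D ∈ I.tangentsThrough p E ∧ g ∈ D := fun g hg => by
    refine (existsUnique_congr fun D => ?_).2 (existsUnique_tangent hE hg hpE)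
    rw [mem_tangentsThrough, mem_pencil]
    tauto
  rw [← I.circle_card E hE, ← sum_card_inter_eq_card_of_existsUnique hunique, card_eq_sum_ones]
  exact sum_congr rfl fun D hD => (mem_tangentsThrough.1 hD).2.2.symm

lemma ParallelAt.eq_of_tangent (hq : Even q) (h : I.ParallelAt p C D) (hE : E ∈ I.circles)
    (hpE : p ∉ E) (hC : #(E ∩ C) = 1) (hD : #(E ∩ D) = 1) : C = D := by
  obtain ⟨a, ha⟩ : E.Nonempty := card_pos.1 (I.circle_card E hE ▸ q.succ_pos)
  have hap : a ≠ p := ne_of_mem_of_not_mem ha hpE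
  have hparallel : ∀ M ∈ I.tangentsThrough p E, ∃ L, I.ParallelAt p M L ∧ a ∈ L := fun M hM =>
    have hM := mem_tangentsThrough.1 hM
    (existsUnique_parallelAt hM.1 hM.2.1 hap).exists
  -- The `q + 1` circles through `p` and `a` represent the parallel classes.
  choose! direction hdir hadir using hparallel
  have hmaps : Set.MapsTo direction (I.tangentsThrough p E) (I.pencil p a) := fun M hM =>
    mem_pencil.2 ⟨(hdir M hM).right_mem, (hdir M hM).mem_right, hadir M hM⟩
  have hsurj : Set.SurjOn direction (I.tangentsThrough p E) (I.pencil p a) := fun L hL => by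
    obtain ⟨hL, hpL, haL⟩ := mem_pencil.1 hL
    obtain ⟨M, hLM, hM⟩ := exists_parallelAt_tangent hq hL hpL hE hpE
    have hMT := mem_tangentsThrough.2 ⟨hLM.right_mem, hLM.mem_right, hM⟩
    exact ⟨M, hMT, ((hLM.trans (hdir M hMT)).eq_of_mem hap haL (hadir M hMT)).symm⟩
  have hinj : Set.InjOn direction (I.tangentsThrough p E) :=
    injOn_of_surjOn_of_card_le direction hmaps hsurj
      (by rw [card_tangentsThrough hE hpE, I.card_pencil hap.symm])
  have hCT := mem_tangentsThrough.2 ⟨h.left_mem, h.mem_left, hC⟩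
  have hDT := mem_tangentsThrough.2 ⟨h.right_mem, h.mem_right, hD⟩
  exact hinj hCT hDT (((hdir C hCT).symm.trans (h.trans (hdir D hDT))).eq_of_mem hap
    (hadir C hCT) (hadir D hDT))

end Oval

end InversivePlane

/-- In an inversive plane of even order `q`, two distinct circles each tangent
to every circle through two distinct points `x, y` are disjoint. -/
theorem tangent_circles_of_point_pair_disjoint
    {q : ℕ} {P : Type} [Fintype P] [DecidableEq P]
    (hq : Even q) (I : InversivePlane q P) (x y : P) (hxy : x ≠ y)
    (C₁ C₂ : Finset P) (hC₁ : C₁ ∈ I.circles) (hC₂ : C₂ ∈ I.circles)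
    (hne : C₁ ≠ C₂)
    (htan₁ : ∀ D ∈ I.circles, x ∈ D → y ∈ D → (D ∩ C₁).card = 1)
    (htan₂ : ∀ D ∈ I.circles, x ∈ D → y ∈ D → (D ∩ C₂).card = 1) :
    C₁ ∩ C₂ = ∅ := by
  have htan₁ : ∀ D ∈ I.pencil x y, #(D ∩ C₁) = 1 := by
    simpa only [InversivePlane.mem_pencil, and_imp] using htan₁
  have htan₂ : ∀ D ∈ I.pencil x y, #(D ∩ C₂) = 1 := by
    simpa only [InversivePlane.mem_pencil, and_imp] using htan₂
  refine eq_empty_of_forall_notMem fun p hp => hne ?_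
  obtain ⟨hp₁, hp₂⟩ := mem_inter.1 hp
  have hdisj := InversivePlane.disjoint_of_tangent_pencil hC₁ hxy htan₁
  have hpxy : p ≠ x ∧ p ≠ y := by simpa using disjoint_right.1 hdisj hp₁
  obtain ⟨D, hD, hpD⟩ := (I.existsUnique_mem_pencil hxy hpxy.1.symm hpxy.2.symm).exists
  obtain ⟨E, hE, hpE⟩ := I.exists_mem_pencil_notMem hxy hpxy.1.symm hpxy.2.symm
  have hDI := (InversivePlane.mem_pencil.1 hD).1
  have hEI := (InversivePlane.mem_pencil.1 hE).1
  have hDC₁ : I.ParallelAt p D C₁ := ⟨hDI, hC₁, hpD, hp₁, .inr (htan₁ D hD)⟩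
  have hDC₂ : I.ParallelAt p D C₂ := ⟨hDI, hC₂, hpD, hp₂, .inr (htan₂ D hD)⟩
  exact (hDC₁.symm.trans hDC₂).eq_of_tangent hq hEI hpE (htan₁ E hE) (htan₂ E hE)
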